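/- Let u : ℝ → ℂ, λ₁ ∈ ℂ, and let η = (η₁,η₂) : ℝ → ℂ² be a differentiable solution of the KN spectral problem at λ₁ with potential u such that d_{λ₁}(η(x),η(x)) ≠ 0 for all x ∈ ℝ. Define u⁽¹⁾(x) := B_{λ₁}(η(x))u(x) and η⁽¹⁾(x) := (conj(η₂(x))/d_{λ₁}(η(x),η(x)), conj(η₁(x))/d_{conj(λ₁)}(η(x),η(x))). Then η⁽¹⁾ is a differentiable solution of the KN spectral problem at λ₁ with potential u⁽¹⁾, i.e. (η⁽¹⁾)'(x) = (−iλ₁²σ₃ + λ₁Q(u⁽¹⁾(x)))η⁽¹⁾(x) for all x ∈ ℝ. -/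

import Mathlib

/-!
Write `a, b` for the components of `η`, `A, B` for their conjugates, `L` for the conjugate of `l`,
`d = l a A + L b B` and `D = L a A + l b B`. The spectral problem for `η` and its conjugate give
the derivatives of `a, b, A, B`, and in `d'` the terms containing `conj u` cancel:
`d' = (l² - L²) (u A b - i (l a A - L b B))`, with `D'` the conjugate of this
(`hasDerivAt_dForm`, `hasDerivAt_dForm_conj`). After multiplication by `d²` (respectively `D²`)
the quotient rule for `B / d` (respectively `A / D`) turns each component of the claim into a
polynomial identity. Here `D = conj d` is nonzero because `d` is.
-/

open Complex

/-- The Pauli matrix `σ₃`. -/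
def sigma3 : Matrix (Fin 2) (Fin 2) ℂ := !![1, 0; 0, -1]

/-- The potential matrix `Q(u) = [[0,u],[−conj(u),0]]`. -/
def Qmat (u : ℂ) : Matrix (Fin 2) (Fin 2) ℂ := !![0, u; -(starRingEnd ℂ u), 0]

/-- `ψ` solves the Kaup–Newell spectral problem at `λ` with potential `u`:
`ψ'(x) = (−iλ²σ₃ + λQ(u(x)))ψ(x)`. -/
def SolvesKN (u : ℝ → ℂ) (l : ℂ) (ψ : ℝ → Fin 2 → ℂ) : Prop :=
  ∀ x : ℝ, HasDerivAt ψ (((-Complex.I * l ^ 2) • sigma3 + l • Qmat (u x)).mulVec (ψ x)) x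

/-- The bilinear form `d_λ(η,η) := λ|η₁|² + conj(λ)|η₂|²`. -/
noncomputable def dForm (l : ℂ) (η : Fin 2 → ℂ) : ℂ :=
  l * (‖η 0‖ : ℂ) ^ 2 + (starRingEnd ℂ l) * (‖η 1‖ : ℂ) ^ 2

/-- `G_λ(η) := d_{conj(λ)}(η,η)/d_λ(η,η)`. -/
noncomputable def Gop (l : ℂ) (η : Fin 2 → ℂ) : ℂ :=
  dForm (starRingEnd ℂ l) η / dForm l η

/-- `S_λ(η) := 2i(λ² − conj(λ)²)η₁conj(η₂)/d_λ(η,η)`. -/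
noncomputable def Sop (l : ℂ) (η : Fin 2 → ℂ) : ℂ :=
  2 * Complex.I * (l ^ 2 - (starRingEnd ℂ l) ^ 2) * η 0 * (starRingEnd ℂ (η 1)) / dForm l η

/-- The Bäcklund transformation `B_λ(η)u := G_λ(η)(−G_λ(η)u + S_λ(η))`. -/
noncomputable def Bop (l : ℂ) (η : Fin 2 → ℂ) (u : ℂ) : ℂ :=
  Gop l η * (-(Gop l η) * u + Sop l η)

/-- Replacing `‖z‖²` by `z * conj z` makes the form a polynomial. -/
lemma dForm_eq (l : ℂ) (η : Fin 2 → ℂ) :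
    dForm l η = l * (η 0 * starRingEnd ℂ (η 0)) + starRingEnd ℂ l * (η 1 * starRingEnd ℂ (η 1)) := by
  simp only [dForm, Complex.mul_conj']

lemma conj_dForm (l : ℂ) (η : Fin 2 → ℂ) :
    starRingEnd ℂ (dForm l η) = dForm (starRingEnd ℂ l) η := by
  simp [dForm]

lemma SolvesKN.hasDerivAt_zero {u : ℝ → ℂ} {l : ℂ} {η : ℝ → Fin 2 → ℂ} (h : SolvesKN u l η)
    (x : ℝ) :
    HasDerivAt (fun y => η y 0) (-Complex.I * l ^ 2 * η x 0 + l * u x * η x 1) x := by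
  refine (hasDerivAt_pi.1 (h x) 0).congr_deriv ?_
  simp [sigma3, Qmat, Matrix.mulVec, dotProduct, Fin.sum_univ_two]

lemma SolvesKN.hasDerivAt_one {u : ℝ → ℂ} {l : ℂ} {η : ℝ → Fin 2 → ℂ} (h : SolvesKN u l η)
    (x : ℝ) :
    HasDerivAt (fun y => η y 1)
      (-l * starRingEnd ℂ (u x) * η x 0 + Complex.I * l ^ 2 * η x 1) x := by
  refine (hasDerivAt_pi.1 (h x) 1).congr_deriv ?_
  simp [sigma3, Qmat, Matrix.mulVec, dotProduct, Fin.sum_univ_two]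

lemma hasDerivAt_conj {f : ℝ → ℂ} {f' : ℂ} {x : ℝ} (h : HasDerivAt f f' x) :
    HasDerivAt (fun y => starRingEnd ℂ (f y)) (starRingEnd ℂ f') x :=
  h.star

/-- The terms with `conj u` cancel in the derivative of `d_λ(η,η)`. -/
lemma SolvesKN.hasDerivAt_dForm {u : ℝ → ℂ} {l : ℂ} {η : ℝ → Fin 2 → ℂ} (h : SolvesKN u l η)
    (x : ℝ) :
    HasDerivAt (fun y => dForm l (η y))
      ((l ^ 2 - starRingEnd ℂ l ^ 2) * (u x * starRingEnd ℂ (η x 0) * η x 1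
        - Complex.I * (l * (η x 0 * starRingEnd ℂ (η x 0))
          - starRingEnd ℂ l * (η x 1 * starRingEnd ℂ (η x 1))))) x := by
  simp only [dForm_eq]
  have h0 := h.hasDerivAt_zero x
  have h1 := h.hasDerivAt_one x
  refine (((h0.mul (hasDerivAt_conj h0)).const_mul l).add
    ((h1.mul (hasDerivAt_conj h1)).const_mul (starRingEnd ℂ l))).congr_deriv ?_
  simp only [map_add, map_mul, map_neg, map_pow, Complex.conj_I, Complex.conj_conj]
  ring

lemma SolvesKN.hasDerivAt_dForm_conj {u : ℝ → ℂ} {l : ℂ} {η : ℝ → Fin 2 → ℂ}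
    (h : SolvesKN u l η) (x : ℝ) :
    HasDerivAt (fun y => dForm (starRingEnd ℂ l) (η y))
      ((starRingEnd ℂ l ^ 2 - l ^ 2) * (starRingEnd ℂ (u x) * η x 0 * starRingEnd ℂ (η x 1)
        + Complex.I * (starRingEnd ℂ l * (η x 0 * starRingEnd ℂ (η x 0))
          - l * (η x 1 * starRingEnd ℂ (η x 1))))) x := by
  simp only [← conj_dForm]
  refine (hasDerivAt_conj (h.hasDerivAt_dForm x)).congr_deriv ?_
  simp only [map_sub, map_mul, map_pow, Complex.conj_I, Complex.conj_conj]
  ring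

theorem pullback_eigenvector (u : ℝ → ℂ) (l1 : ℂ) (η : ℝ → Fin 2 → ℂ)
    (hη : SolvesKN u l1 η) (hd : ∀ x : ℝ, dForm l1 (η x) ≠ 0) :
    SolvesKN (fun x => Bop l1 (η x) (u x)) l1
      (fun x => ![starRingEnd ℂ (η x 1) / dForm l1 (η x),
                  starRingEnd ℂ (η x 0) / dForm (starRingEnd ℂ l1) (η x)]) := by
  intro x
  have hd0 := hd x
  have hD0 : dForm (starRingEnd ℂ l1) (η x) ≠ 0 := by
    rw [← conj_dForm]
    exact (map_ne_zero _).2 hd0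
  have h0 := hasDerivAt_conj (hη.hasDerivAt_zero x)
  have h1 := hasDerivAt_conj (hη.hasDerivAt_one x)
  have hde := dForm_eq l1 (η x)
  have hDe := dForm_eq (starRingEnd ℂ l1) (η x)
  rw [Complex.conj_conj] at hDe
  rw [hasDerivAt_pi]
  intro i
  fin_cases i
  · refine (h1.div (hη.hasDerivAt_dForm x) hd0).congr_deriv ?_
    simp [sigma3, Qmat, Matrix.mulVec, dotProduct, Fin.sum_univ_two, Bop, Gop, Sop]
    -- `d` and `D` stay atoms while denominators are cleared, and are expanded afterwards.
    generalize dForm l1 (η x) = d at *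
    generalize dForm (starRingEnd ℂ l1) (η x) = D at *
    field_simp
    rw [hde, hDe]
    ring
  · refine (h0.div (hη.hasDerivAt_dForm_conj x) hD0).congr_deriv ?_
    simp [sigma3, Qmat, Matrix.mulVec, dotProduct, Fin.sum_univ_two, Bop, Gop, Sop, conj_dForm,
      map_ofNat (starRingEnd ℂ) 2]
    generalize dForm l1 (η x) = d at *
    generalize dForm (starRingEnd ℂ l1) (η x) = D at *
    field_simp
    rw [hde, hDe]
    ring
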